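/- Let L be a nilpotent symplectic alternating algebra of dimension 2n ≥ 2 over a field 𝔽. Then there exists an ascending chain of isotropic ideals {0} = I₀ < I₁ < ⋯ < I_{n−1} < I_n with dim I_r = r for r = 0, …, n. Furthermore, if 2n ≥ 6, then I_{n−1}^⊥ is abelian, the chain {0} < I₂ < I₃ < ⋯ < I_{n−1} < I_{n−1}^⊥ < I_{n−2}^⊥ < ⋯ < I₂^⊥ < L is central (each term is an ideal and the product of each term with L lies in the preceding term), and consequently L is nilpotent of class at most 2n − 3. -/

import Mathlib

/-!
The chain is built one dimension at a time. If `I` is an isotropic ideal with `dim I < n`, then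
`I^⊥` is an ideal strictly containing `I`, and nilpotency gives `x ∈ I^⊥ ∖ I` with `x·L ⊆ I`
(`exists_mem_perp_mul_mem`). Then `I + 𝔽x` is again an isotropic ideal, and `(I + 𝔽x)·L ⊆ I`
(`exists_step`). Hence the chain satisfies `I_{k+1}·L ⊆ I_k` for all `k < n`.

The remaining claims follow by duality, because `(u·v, w)` is an alternating trilinear form.

* `I₂` is central (`prodSub_eq_bot_of_line`): for `y ∈ I₂` one has `y·u = f(u) x`, where `x` spans
  `I₁`, so `f(u) (x, w)` is alternating in `u, w`; as `(x, ·) ≠ 0`, this forces `f = 0`.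
* `I_k^⊥·L ⊆ I_{k+1}^⊥` is dual to `I_{k+1}·L ⊆ I_k` (`prodSub_perp_le`).
* With `J = I_{n-1}^⊥`, one has `(I_n·J, L) = (I_n·L, J) ⊆ (I_{n-1}, J) = 0`, so `I_n·J = 0`. Since
  `I_n` has codimension one in `J` and the product is alternating, `J·J = 0`. Dually, `J·L` lies in
  `J^⊥ = I_{n-1}`.

The bound on the class is read off the resulting central chain, which has `2n - 3` steps.
-/

variable {𝔽 : Type*} [Field 𝔽] {L : Type*} [AddCommGroup L] [Module 𝔽 L]

structure SymplecticAlternatingAlgebra (𝔽 L : Type*) [Field 𝔽] [AddCommGroup L]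
    [Module 𝔽 L] where
  form : L →ₗ[𝔽] L →ₗ[𝔽] 𝔽
  mul : L →ₗ[𝔽] L →ₗ[𝔽] L
  form_alt : ∀ x, form x x = 0
  form_nondeg : ∀ x, (∀ y, form x y = 0) → x = 0
  mul_alt : ∀ x, mul x x = 0
  compat : ∀ u v w, form (mul u v) w = form (mul v w) u

namespace SymplecticAlternatingAlgebra

variable (S : SymplecticAlternatingAlgebra 𝔽 L)

/-- `U·V`, the span of all products `u·v`. -/
def prodSub (U V : Submodule 𝔽 L) : Submodule 𝔽 L := Submodule.map₂ S.mul U V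

/-- An ideal: `I·L ⊆ I`. -/
def IsIdeal (I : Submodule 𝔽 L) : Prop := S.prodSub I ⊤ ≤ I

/-- Orthogonal complement with respect to the form. -/
def perp (U : Submodule 𝔽 L) : Submodule 𝔽 L where
  carrier := {x | ∀ u ∈ U, S.form x u = 0}
  add_mem' := by
    intro a b ha hb u hu
    simp [map_add, ha u hu, hb u hu]
  zero_mem' := by
    intro u hu
    simp
  smul_mem' := by
    intro c a ha u hu
    simp [ha u hu]

/-- `lcs n = L^(n+1)`: the lower central series, `lcs 0 = L¹ = L`. -/
def lcs : ℕ → Submodule 𝔽 L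
  | 0 => ⊤
  | n + 1 => S.prodSub (lcs n) ⊤

/-- `ucs n = Z_n(L)`: the upper central series. -/
def ucs : ℕ → Submodule 𝔽 L
  | 0 => ⊥
  | n + 1 => ⨅ y : L, (ucs n).comap (S.mul.flip y)

/-- The center `Z(L)`. -/
def center : Submodule 𝔽 L := ⨅ y : L, LinearMap.ker (S.mul.flip y)

/-- Nilpotency: some term of the lower central series vanishes. -/
def IsNilpotent : Prop := ∃ n, S.lcs n = ⊥

/-- `s` generates `L` as an algebra: the smallest subspace containing `s`
and closed under the multiplication is `L` itself. -/
def Generates (s : Set L) : Prop :=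
  ∀ M : Submodule 𝔽 L, s ⊆ (M : Set L) → S.prodSub M M ≤ M → M = ⊤

end SymplecticAlternatingAlgebra

open SymplecticAlternatingAlgebra Module

namespace SymplecticAlternatingAlgebra

variable (S : SymplecticAlternatingAlgebra 𝔽 L)

lemma form_swap (x y : L) : S.form x y = -S.form y x := by
  have h := S.form_alt (x + y)
  simp only [map_add, LinearMap.add_apply, S.form_alt, zero_add, add_zero] at h
  exact eq_neg_of_add_eq_zero_right h

lemma mul_swap (x y : L) : S.mul x y = -S.mul y x := by
  have h := S.mul_alt (x + y)
  simp only [map_add, LinearMap.add_apply, S.mul_alt, zero_add, add_zero] at h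
  exact eq_neg_of_add_eq_zero_right h

lemma prodSub_le_iff {U V W : Submodule 𝔽 L} :
    S.prodSub U V ≤ W ↔ ∀ u ∈ U, ∀ v ∈ V, S.mul u v ∈ W :=
  Submodule.map₂_le

lemma mem_perp_iff {U : Submodule 𝔽 L} {x : L} : x ∈ S.perp U ↔ ∀ u ∈ U, S.form x u = 0 :=
  Iff.rfl

lemma le_perp_perp (U : Submodule 𝔽 L) : U ≤ S.perp (S.perp U) := by
  intro x hx y hy
  rw [S.form_swap, hy x hx, neg_zero]

lemma perp_eq_orthogonal (U : Submodule 𝔽 L) :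
    S.perp U = LinearMap.BilinForm.orthogonal S.form U := by
  ext x
  rw [S.mem_perp_iff, LinearMap.BilinForm.mem_orthogonal_iff]
  refine forall₂_congr fun u _ => ?_
  rw [S.form_swap, neg_eq_zero]

lemma finrank_perp [FiniteDimensional 𝔽 L] (U : Submodule 𝔽 L) :
    Module.finrank 𝔽 (S.perp U) = Module.finrank 𝔽 L - Module.finrank 𝔽 U := by
  rw [S.perp_eq_orthogonal]
  refine LinearMap.BilinForm.finrank_orthogonal ?_ U
  refine ⟨fun x hx => S.form_nondeg x hx, fun x hx => S.form_nondeg x fun y => ?_⟩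
  rw [S.form_swap, hx y, neg_zero]

lemma perp_perp [FiniteDimensional 𝔽 L] (U : Submodule 𝔽 L) : S.perp (S.perp U) = U := by
  refine (Submodule.eq_of_le_of_finrank_eq (S.le_perp_perp U) ?_).symm
  have := Submodule.finrank_le U
  rw [S.finrank_perp, S.finrank_perp]
  omega

/-- Duality between an ideal chain and its orthogonal chain. -/
lemma prodSub_perp_le {U V : Submodule 𝔽 L} (h : S.prodSub V ⊤ ≤ U) :
    S.prodSub (S.perp U) ⊤ ≤ S.perp V := by
  rw [prodSub_le_iff] at h ⊢
  intro z hz u _ w hw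
  rw [S.compat, S.form_swap, S.mul_swap, map_neg, hz _ (h w hw u trivial), neg_zero, neg_zero]

lemma mul_eq_zero_of_forall_form {a b : L} (h : ∀ u, S.form (S.mul a u) b = 0) :
    S.mul a b = 0 := by
  refine S.form_nondeg _ fun w => ?_
  rw [S.mul_swap, map_neg, LinearMap.neg_apply, S.compat, h w, neg_zero]

lemma exists_mem_perp_mul_mem (hnil : S.IsNilpotent) {I : Submodule 𝔽 L} (hI : S.IsIdeal I)
    (hlt : ¬ S.perp I ≤ I) :
    ∃ x ∈ S.perp I, x ∉ I ∧ ∀ y, S.mul x y ∈ I := by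
  by_contra! hcon
  obtain ⟨m, hm⟩ := hnil
  have hperp := (S.prodSub_le_iff).1 (S.prodSub_perp_le hI)
  -- otherwise `I^⊥` contains elements outside `I` arbitrarily deep in the lower central series
  have key : ∀ k, ∃ x ∈ S.perp I, x ∈ S.lcs k ∧ x ∉ I := by
    intro k
    induction k with
    | zero =>
      obtain ⟨x, hx, hxI⟩ := SetLike.not_le_iff_exists.1 hlt
      exact ⟨x, hx, trivial, hxI⟩
    | succ k ih =>
      obtain ⟨x, hx, hxk, hxI⟩ := ih
      obtain ⟨y, hy⟩ := hcon x hx hxI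
      exact ⟨_, hperp x hx y trivial, Submodule.apply_mem_map₂ _ hxk trivial, hy⟩
  obtain ⟨x, -, hx, hxI⟩ := key m
  rw [hm, Submodule.mem_bot] at hx
  exact hxI (hx ▸ I.zero_mem)

/-- One step of the chain: an isotropic ideal below the maximal dimension extends, centrally and
by one dimension, to a larger isotropic ideal. -/
lemma exists_step [FiniteDimensional 𝔽 L] (hnil : S.IsNilpotent) {n : ℕ}
    (hdim : Module.finrank 𝔽 L = 2 * n) (I : Submodule 𝔽 L) (hI : S.IsIdeal I)
    (hiso : I ≤ S.perp I) (hfr : Module.finrank 𝔽 I < n) :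
    ∃ I' : Submodule 𝔽 L, I < I' ∧ S.prodSub I' ⊤ ≤ I ∧ I' ≤ S.perp I' ∧
      Module.finrank 𝔽 I' = Module.finrank 𝔽 I + 1 := by
  have hlt : ¬ S.perp I ≤ I := by
    intro h
    have h1 := Submodule.finrank_mono h
    rw [S.finrank_perp] at h1
    omega
  obtain ⟨x, hx, hxI, hxL⟩ := S.exists_mem_perp_mul_mem hnil hI hlt
  have hI' := S.prodSub_le_iff.1 hI
  refine ⟨I ⊔ 𝔽 ∙ x, ?_, ?_, ?_, ?_⟩
  · refine lt_of_le_of_ne le_sup_left fun h => hxI ?_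
    rw [h]
    exact Submodule.mem_sup_right (Submodule.mem_span_singleton_self x)
  · rw [prodSub_le_iff]
    intro u hu v _
    obtain ⟨a, ha, b, hb, rfl⟩ := Submodule.mem_sup.1 hu
    obtain ⟨c, rfl⟩ := Submodule.mem_span_singleton.1 hb
    simp only [map_add, map_smul, LinearMap.add_apply, LinearMap.smul_apply]
    exact I.add_mem (hI' a ha v trivial) (I.smul_mem c (hxL v))
  · intro u hu v hv
    obtain ⟨a, ha, b, hb, rfl⟩ := Submodule.mem_sup.1 hu
    obtain ⟨c, rfl⟩ := Submodule.mem_span_singleton.1 hb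
    obtain ⟨a', ha', b', hb', rfl⟩ := Submodule.mem_sup.1 hv
    obtain ⟨c', rfl⟩ := Submodule.mem_span_singleton.1 hb'
    have h1 : S.form a x = 0 := by rw [S.form_swap, hx a ha, neg_zero]
    simp [hiso ha a' ha', hx a' ha', h1, S.form_alt]
  · exact Submodule.finrank_sup_span_singleton hxI

/-- An element multiplying `L` into a line is central: the associated alternating form would
otherwise have rank one. -/
lemma prodSub_eq_bot_of_line {I J : Submodule 𝔽 L} (hI : Module.finrank 𝔽 I = 1)
    (hJ : S.prodSub J ⊤ ≤ I) : S.prodSub J ⊤ = ⊥ := by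
  rw [eq_bot_iff, prodSub_le_iff]
  rw [prodSub_le_iff] at hJ
  intro y hy u _
  obtain ⟨⟨x, hxI⟩, hx0, hx⟩ := finrank_eq_one_iff'.1 hI
  have hx0' : x ≠ 0 := fun h => hx0 (Subtype.ext h)
  have hf : ∀ u, ∃ c : 𝔽, c • x = S.mul y u := fun u => by
    obtain ⟨c, hc⟩ := hx ⟨_, hJ y hy u trivial⟩
    exact ⟨c, congrArg Subtype.val hc⟩
  choose f hf using hf
  obtain ⟨w, hw⟩ : ∃ w, S.form x w ≠ 0 := by
    by_contra! h
    exact hx0' (S.form_nondeg x h)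
  have hself : ∀ v, S.form (S.mul y v) v = 0 := fun v => by
    rw [S.compat, S.mul_alt, map_zero, LinearMap.zero_apply]
  have hswap : S.form (S.mul y u) w = - S.form (S.mul y w) u := by
    rw [S.compat, S.mul_swap u w, map_neg, LinearMap.neg_apply, ← S.compat]
  have hfw : f w = 0 := by
    have h := hself w
    rw [← hf w, map_smul, LinearMap.smul_apply, smul_eq_mul] at h
    exact (mul_eq_zero.1 h).resolve_right hw
  rw [← hf u, ← hf w, hfw, zero_smul, map_zero, LinearMap.zero_apply, neg_zero, map_smul,
    LinearMap.smul_apply, smul_eq_mul] at hswap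
  rw [← hf u, (mul_eq_zero.1 hswap).resolve_right hw, zero_smul]
  exact Submodule.zero_mem _

lemma exists_chain [FiniteDimensional 𝔽 L] (hnil : S.IsNilpotent) {n : ℕ}
    (hdim : Module.finrank 𝔽 L = 2 * n) :
    ∃ I : ℕ → Submodule 𝔽 L, I 0 = ⊥ ∧
      (∀ r ≤ n, S.IsIdeal (I r) ∧ I r ≤ S.perp (I r) ∧ Module.finrank 𝔽 (I r) = r) ∧
      ∀ r < n, I r < I (r + 1) ∧ S.prodSub (I (r + 1)) ⊤ ≤ I r := by
  choose! f hf using S.exists_step hnil hdim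
  obtain ⟨I, h0, hs⟩ : ∃ I : ℕ → Submodule 𝔽 L, I 0 = ⊥ ∧ ∀ k, I (k + 1) = f (I k) :=
    ⟨fun k => f^[k] ⊥, rfl, fun k => Function.iterate_succ_apply' f k ⊥⟩
  have hP : ∀ r ≤ n, S.IsIdeal (I r) ∧ I r ≤ S.perp (I r) ∧ Module.finrank 𝔽 (I r) = r := by
    intro r
    induction r with
    | zero =>
      intro _
      rw [h0]
      refine ⟨?_, bot_le, finrank_bot 𝔽 L⟩
      rw [IsIdeal, prodSub_le_iff]
      intro u hu v _
      have hu0 : u = 0 := hu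
      rw [hu0, map_zero, LinearMap.zero_apply]
      exact Submodule.zero_mem _
    | succ r ih =>
      intro hr
      obtain ⟨h1, h2, h3⟩ := ih (by omega)
      obtain ⟨g1, g2, g3, g4⟩ := hf (I r) h1 h2 (by omega)
      rw [← hs] at g1 g2 g3 g4
      exact ⟨g2.trans g1.le, g3, by rw [g4, h3]⟩
  refine ⟨I, h0, hP, fun r hr => ?_⟩
  obtain ⟨h1, h2, h3⟩ := hP r hr.le
  obtain ⟨g1, g2, -, -⟩ := hf (I r) h1 h2 (by omega)
  rw [← hs] at g1 g2
  exact ⟨g1, g2⟩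

/-- If `A` has codimension one in `B` and `A·B = 0`, then `B·B = 0`, as the product is
alternating. -/
lemma prodSub_self_eq_bot [FiniteDimensional 𝔽 L] {A B : Submodule 𝔽 L} (hAB : A ≤ B)
    (hfr : Module.finrank 𝔽 B = Module.finrank 𝔽 A + 1)
    (h : ∀ a ∈ A, ∀ b ∈ B, S.mul a b = 0) : S.prodSub B B = ⊥ := by
  obtain ⟨b, hb, hbA⟩ : ∃ b ∈ B, b ∉ A := by
    refine SetLike.not_le_iff_exists.1 fun hBA => ?_
    have := Submodule.finrank_mono hBA
    omega
  have hB : A ⊔ 𝔽 ∙ b = B := by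
    refine Submodule.eq_of_le_of_finrank_eq
      (sup_le hAB ((Submodule.span_singleton_le_iff_mem _ _).2 hb)) ?_
    rw [Submodule.finrank_sup_span_singleton hbA, hfr]
  rw [eq_bot_iff, prodSub_le_iff]
  intro u hu v hv
  rw [← hB] at hu
  obtain ⟨a, ha, b', hb', rfl⟩ := Submodule.mem_sup.1 hu
  obtain ⟨c, rfl⟩ := Submodule.mem_span_singleton.1 hb'
  have hv' := hv
  rw [← hB] at hv'
  obtain ⟨a', ha', b'', hb'', rfl⟩ := Submodule.mem_sup.1 hv'
  obtain ⟨c', rfl⟩ := Submodule.mem_span_singleton.1 hb''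
  have h1 : S.mul b a' = 0 := by rw [S.mul_swap, h a' ha' b hb, neg_zero]
  rw [LinearMap.map_add₂, h a ha _ hv]
  simp [h1, S.mul_alt]

end SymplecticAlternatingAlgebra

theorem isotropic_ideal_chain [FiniteDimensional 𝔽 L]
    (S : SymplecticAlternatingAlgebra 𝔽 L) (hnil : S.IsNilpotent)
    (n : ℕ) (hn : 1 ≤ n) (hdim : Module.finrank 𝔽 L = 2 * n) :
    ∃ I : ℕ → Submodule 𝔽 L,
      I 0 = ⊥ ∧
      (∀ r, r ≤ n → S.IsIdeal (I r)) ∧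
      (∀ r, r ≤ n → I r ≤ S.perp (I r)) ∧
      (∀ r, r ≤ n → Module.finrank 𝔽 (I r) = r) ∧
      (∀ r, r < n → I r < I (r + 1)) ∧
      (3 ≤ n →
        S.prodSub (S.perp (I (n - 1))) (S.perp (I (n - 1))) = ⊥ ∧
        S.prodSub (I 2) ⊤ = ⊥ ∧
        (∀ k, 2 ≤ k → k + 1 ≤ n - 1 → S.prodSub (I (k + 1)) ⊤ ≤ I k) ∧
        S.prodSub (S.perp (I (n - 1))) ⊤ ≤ I (n - 1) ∧
        (∀ k, 2 ≤ k → k + 1 ≤ n - 1 →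
          S.prodSub (S.perp (I k)) ⊤ ≤ S.perp (I (k + 1))) ∧
        S.lcs 1 ≤ S.perp (I 2) ∧
        S.lcs (2 * n - 3) = ⊥) := by
  obtain ⟨I, h0, hP, hstep⟩ := S.exists_chain hnil hdim
  refine ⟨I, h0, fun r hr => (hP r hr).1, fun r hr => (hP r hr).2.1, fun r hr => (hP r hr).2.2,
    fun r hr => (hstep r hr).1, fun h3 => ?_⟩
  obtain ⟨m, rfl⟩ : ∃ m, n = m + 3 := ⟨n - 3, by omega⟩
  have hsub : m + 3 - 1 = m + 2 := by omega
  rw [hsub]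
  have hcen2 : S.prodSub (I 2) ⊤ = ⊥ :=
    S.prodSub_eq_bot_of_line (hP 1 (by omega)).2.2 (hstep 1 (by omega)).2
  have hup : ∀ k < m + 3, S.prodSub (I (k + 1)) ⊤ ≤ I k := fun k hk => (hstep k hk).2
  have hdown : ∀ k < m + 3, S.prodSub (S.perp (I k)) ⊤ ≤ S.perp (I (k + 1)) :=
    fun k hk => S.prodSub_perp_le (hup k hk)
  have hlcs1 : S.lcs 1 ≤ S.perp (I 2) := by
    have h := S.prodSub_perp_le hcen2.le
    have htop : S.perp (⊥ : Submodule 𝔽 L) = ⊤ := by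
      refine eq_top_iff.2 fun x _ u hu => ?_
      have hu0 : u = 0 := hu
      rw [hu0, map_zero]
    rwa [htop] at h
  have hab : S.prodSub (S.perp (I (m + 2))) (S.perp (I (m + 2))) = ⊥ := by
    refine S.prodSub_self_eq_bot (A := I (m + 3)) ?_ ?_ ?_
    · intro x hx u hu
      exact (hP (m + 3) le_rfl).2.1 hx u ((hstep (m + 2) (by omega)).1.le hu)
    · rw [S.finrank_perp, hdim, (hP (m + 2) (by omega)).2.2, (hP (m + 3) le_rfl).2.2]
      omega
    · intro a ha b hb
      refine S.mul_eq_zero_of_forall_form fun u => ?_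
      rw [S.form_swap, hb _ (S.prodSub_le_iff.1 (hup (m + 2) (by omega)) a ha u trivial), neg_zero]
  have hmid : S.prodSub (S.perp (I (m + 2))) ⊤ ≤ I (m + 2) := by
    conv_rhs => rw [← S.perp_perp (I (m + 2))]
    rw [prodSub_le_iff]
    intro z hz u _ w hw
    have hwz : S.mul w z = 0 := by
      have h := S.prodSub_le_iff.1 hab.le w hw z hz
      rwa [Submodule.mem_bot] at h
    rw [← S.compat, hwz, map_zero, LinearMap.zero_apply]
  have hlcs_step : ∀ {k U V}, S.lcs k ≤ U → S.prodSub U ⊤ ≤ V → S.lcs (k + 1) ≤ V :=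
    fun h h' => (Submodule.map₂_le_map₂_left h).trans h'
  have hdesc : ∀ j ≤ m, S.lcs (j + 1) ≤ S.perp (I (j + 2)) := by
    intro j
    induction j with
    | zero => exact fun _ => hlcs1
    | succ j ih => exact fun hj => hlcs_step (ih (by omega)) (hdown (j + 2) (by omega))
  have hasc : ∀ j ≤ m, S.lcs (m + 2 + j) ≤ I (m - j + 2) := by
    intro j
    induction j with
    | zero => exact fun _ => hlcs_step (hdesc m le_rfl) hmid
    | succ j ih =>
      intro hj
      have h := ih (by omega)
      rw [show m - j + 2 = (m - (j + 1) + 2) + 1 by omega] at h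
      exact hlcs_step h (hup _ (by omega))
  refine ⟨hab, hcen2, fun k _ hk => hup k (by omega), hmid, fun k _ hk => hdown k (by omega),
    hlcs1, ?_⟩
  have h := hasc m le_rfl
  rw [Nat.sub_self] at h
  rw [show 2 * (m + 3) - 3 = m + 2 + m + 1 by omega, eq_bot_iff]
  exact hlcs_step h hcen2.le
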